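/- Let M ≥ 0, N ≥ 1, ℓ ∈ ℂ^N, k ∈ I_{M,N}, r ∈ {1,…,N}, x ∈ ℂ^M and t ∈ ℂ^N. At every point where all factors occurring in the denominators of w_k(x;t), of w_k(x;t+τe_r), and of the right-hand side are nonzero, one has w_k(x; t + τ e_r) = (∏_{i=1}^M [sinh(t_r + x_i − ℓ_r η + τ) · sinh(t_r − x_i − ℓ_r η + τ)] / [sinh(t_r + x_i + ℓ_r η + τ) · sinh(t_r − x_i + ℓ_r η + τ)]) · w_k(x; t), where e_r is the r-th standard basis vector of ℂ^N. -/

import Mathlib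

/-!
Under `t ↦ t + τ e_r` each factor of `w_k(x;t)` is quasi-periodic. The `q²`-shifted factorials in
`F(x_i;t)` produce the wanted ratio of hyperbolic sines together with an excess factor
`e^{4 ℓ_r η}`, the theta functions in `u_{k;i}(x_i;t)` produce a factor not depending on `x_i`, and
`Φ_k(t)` is multiplied by `φ_{k;r}`. Now `φ_{k;r}` is a product of one factor for each `i`, and for
each of the cases `k_i < r`, `k_i = r`, `k_i > r` this factor times that of `u_{k;i}` is
`e^{-4 ℓ_r η}`, which cancels the excess of `F(x_i;t)`.
-/

open Complex MeasureTheory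

noncomputable section

namespace BQKZ

/-- `(z;p)_∞ = ∏_{m ≥ 0} (1 - z pᵐ)`; used with `p = q²`. -/
def poch (p z : ℂ) : ℂ := ∏' m : ℕ, (1 - z * p ^ m)

/-- renormalized Jacobi theta `θ(z) = (z;p)_∞ (p z⁻¹;p)_∞`, with `p = q²`. -/
def theta (p z : ℂ) : ℂ := poch p z * poch p (p * z⁻¹)

/-- `q² = e^{2τ}` where `q = e^τ`. -/
def qsq (τ : ℂ) : ℂ := exp (2 * τ)

/-- `ξ̃₊ = ξ₊ - η/2 - τ/2`. -/
def xiP (τ η ξp : ℂ) : ℂ := ξp - η / 2 - τ / 2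

/-- `ξ̃₋ = ξ₋ - η/2`. -/
def xiM (η ξm : ℂ) : ℂ := ξm - η / 2

/-- `n_k(r) = #{i : k i = r}`. -/
def nk {M N : ℕ} (k : Fin M → Fin N) (r : Fin N) : ℕ :=
  (Finset.univ.filter fun i => k i = r).card

/-- `φ_{k;r}`. -/
def phiC (η ξp ξm : ℂ) {N M : ℕ} (ℓ : Fin N → ℂ) (k : Fin M → Fin N) (r : Fin N) : ℂ :=
  (∏ i ∈ Finset.univ.filter fun i : Fin M => k i = r,
      exp (2 * (η - ξp - ξm) +
        4 * ((M : ℂ) - ((i : ℕ) + 1) - ∑ s ∈ Finset.univ.filter fun s : Fin N => r ≤ s, ℓ s) * η)) *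
    exp (-4 * ℓ r * η * ((Finset.univ.filter fun i : Fin M => r < k i).card : ℂ))

/-- `Φ_k(t)`. -/
def PhiF (τ η ξp ξm : ℂ) {N M : ℕ} (ℓ : Fin N → ℂ) (k : Fin M → Fin N) (t : Fin N → ℂ) : ℂ :=
  ∏ r, theta (qsq τ) (exp (2 * t r)) / theta (qsq τ) (phiC η ξp ξm ℓ k r * exp (2 * t r))

/-- `F(x;t)`. -/
def Ffun (τ η : ℂ) {N : ℕ} (ℓ : Fin N → ℂ) (x : ℂ) (t : Fin N → ℂ) : ℂ :=
  ∏ s, (poch (qsq τ) (exp (-2 * (t s + x - ℓ s * η))) * poch (qsq τ) (exp (-2 * (t s - x - ℓ s * η)))) /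
       (poch (qsq τ) (exp (-2 * (t s + x + ℓ s * η))) * poch (qsq τ) (exp (-2 * (t s - x + ℓ s * η))))

/-- `g(x)`. -/
def gfun (τ η ξp ξm : ℂ) (x : ℂ) : ℂ :=
  (poch (qsq τ) (qsq τ * exp (2 * (xiP τ η ξp - x))) * poch (qsq τ) (qsq τ * exp (2 * (xiM η ξm - x)))) /
  (poch (qsq τ) (exp (2 * (-xiP τ η ξp - x))) * poch (qsq τ) (exp (2 * (-xiM η ξm - x))))

/-- `h(x)`. -/
def hfun (τ η : ℂ) (x : ℂ) : ℂ :=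
  (1 - exp (-2 * x)) * poch (qsq τ) (qsq τ * exp (-2 * (x + η))) / poch (qsq τ) (exp (-2 * (x - η)))

/-- `ψ_{k;i}`. -/
def psiC (τ η ξp ξm : ℂ) {N M : ℕ} (ℓ : Fin N → ℂ) (k : Fin M → Fin N) (i : Fin M) : ℂ :=
  xiP τ η ξp + xiM η ξm + τ + ℓ (k i) * η +
    2 * ((∑ s ∈ Finset.univ.filter fun s : Fin N => k i < s, ℓ s) - (M : ℂ) + ((i : ℕ) + 1)) * η

/-- `u_{k;i}(x;t)`. -/
def ufun (τ η ξp ξm : ℂ) {N M : ℕ} (ℓ : Fin N → ℂ) (k : Fin M → Fin N) (i : Fin M) (x : ℂ)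
    (t : Fin N → ℂ) : ℂ :=
  exp (-t (k i)) * theta (qsq τ) (exp (2 * (x - t (k i) + psiC τ η ξp ξm ℓ k i))) *
    (∏ s ∈ Finset.univ.filter fun s : Fin N => k i < s,
      theta (qsq τ) (exp (2 * (x - t s - ℓ s * η)))) /
    ∏ s ∈ Finset.univ.filter fun s : Fin N => k i ≤ s,
      theta (qsq τ) (exp (2 * (x - t s + ℓ s * η)))

/-- `w_k(x;t)/Φ_k(t)` (the weight function with the `Φ_k` prefactor cancelled). -/
def w0 (τ η ξp ξm : ℂ) {N M : ℕ} (ℓ : Fin N → ℂ) (k : Fin M → Fin N) (x : Fin M → ℂ)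
    (t : Fin N → ℂ) : ℂ :=
  (∏ i, Ffun τ η ℓ (x i) t * gfun τ η ξp ξm (x i) * ufun τ η ξp ξm ℓ k i (x i) t) *
    ∏ p ∈ Finset.univ.filter fun p : Fin M × Fin M => p.1 < p.2,
      hfun τ η (x p.1 + x p.2) * hfun τ η (x p.1 - x p.2)

/-- the weight function `w_k(x;t)`. -/
def wfun (τ η ξp ξm : ℂ) {N M : ℕ} (ℓ : Fin N → ℂ) (k : Fin M → Fin N) (x : Fin M → ℂ)
    (t : Fin N → ℂ) : ℂ :=
  PhiF τ η ξp ξm ℓ k t * w0 τ η ξp ξm ℓ k x t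

/-- sign `ε_i = ±1` encoded by a boolean. -/
def sg {M : ℕ} (ε : Fin M → Bool) (i : Fin M) : ℂ := if ε i then 1 else -1

/-- `S_M k`: rearrangements of `k`. -/
def rearr {M N : ℕ} (k : Fin M → Fin N) : Finset (Fin M → Fin N) :=
  Finset.univ.filter fun m => ∀ r, nk m r = nk k r

/-- `β_k(x;t)`, the coefficients of the boundary Bethe vectors. -/
def betaF (η ξm : ℂ) {N M : ℕ} (ℓ : Fin N → ℂ) (k : Fin M → Fin N) (x : Fin M → ℂ)
    (t : Fin N → ℂ) : ℂ :=
  exp ((∑ i, ((nk k (k i) : ℂ) / 2 - ℓ (k i))) * η) *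
    ∑ m ∈ rearr k, ∑ ε : Fin M → Bool,
      (∏ i,
          sg ε i * sinh (sg ε i * x i - xiM η ξm) / sinh (t (m i) + sg ε i * x i - ℓ (m i) * η) *
            (∏ s ∈ Finset.univ.filter fun s : Fin N => m i < s,
              sinh (t s + sg ε i * x i + ℓ s * η) / sinh (t s + sg ε i * x i - ℓ s * η)) *
            ∏ s, sinh (t s - sg ε i * x i + ℓ s * η) / sinh (t s - sg ε i * x i - ℓ s * η)) *
        (∏ p ∈ Finset.univ.filter fun p : Fin M × Fin M => p.1 < p.2,
          sinh (sg ε p.1 * x p.1 + sg ε p.2 * x p.2 + η) /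
            sinh (sg ε p.1 * x p.1 + sg ε p.2 * x p.2)) *
        ∏ p ∈ Finset.univ.filter fun p : Fin M × Fin M => m p.1 < m p.2,
          sinh (sg ε p.1 * x p.1 - sg ε p.2 * x p.2 - η) /
            sinh (sg ε p.1 * x p.1 - sg ε p.2 * x p.2)

/-- `(ℓ,η) ∈ D^k_{M,N}`. -/
def Dmn (η : ℂ) {N M : ℕ} (ℓ : Fin N → ℂ) (k : Fin M → Fin N) : Prop :=
  ∀ r, (ℓ r * η).re > max 0 (((nk k r : ℝ) - 1) / 2 * η.re)

/-- the (0-based) position `i_k(s;r) = ∑_{s' < r} n_k(s') + s`. -/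
def blockIdx {M N : ℕ} (k : Fin M → Fin N) (r : Fin N) (s : ℕ) : ℕ :=
  (∑ s' ∈ Finset.univ.filter fun s' : Fin N => s' < r, nk k s') + s

/-- `γ ∈ Γ^k_{M,N}`. -/
def Gam (η : ℂ) {N M : ℕ} (ℓ : Fin N → ℂ) (k : Fin M → Fin N) (γ : Fin M → ℂ) : Prop :=
  (∀ i, -(ℓ (k i) * η).re < (γ i).re ∧ (γ i).re < (ℓ (k i) * η).re) ∧
    ∀ r : Fin N, ∀ s : ℕ, s + 1 < nk k r →
      ∀ (h1 : blockIdx k r s < M) (h2 : blockIdx k r (s + 1) < M),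
        (γ ⟨blockIdx k r (s + 1), h2⟩).re ≤ (γ ⟨blockIdx k r s, h1⟩).re ∧
          (γ ⟨blockIdx k r (s + 1), h2⟩).re + η.re < (γ ⟨blockIdx k r s, h1⟩).re

/-- `γ ∈ Γ^k_{M,N;τ}`. -/
def GamTau (τ η : ℂ) {N M : ℕ} (ℓ : Fin N → ℂ) (k : Fin M → Fin N) (γ : Fin M → ℂ) : Prop :=
  Gam η ℓ k γ ∧
    (∀ i, -(ℓ (k i) * η + τ).re < (γ i).re ∧ (γ i).re < (ℓ (k i) * η + τ).re) ∧
    ∀ r : Fin N, ∀ s : ℕ, s + 1 < nk k r →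
      ∀ (h1 : blockIdx k r s < M) (h2 : blockIdx k r (s + 1) < M),
        (γ ⟨blockIdx k r (s + 1), h2⟩).re + (η - τ).re < (γ ⟨blockIdx k r s, h1⟩).re

/-- `Λ₊ = max_s Re(ℓ_s η)`. -/
def Lam (η : ℂ) {N : ℕ} (ℓ : Fin N → ℂ) : ℝ := ⨆ s, (ℓ s * η).re

/-- the sector `Ã`. -/
def Atil (τ η ξp ξm : ℂ) {N : ℕ} (ℓ : Fin N → ℂ) : Set (Fin N → ℂ) :=
  {t | (∀ i j : Fin N, (j : ℕ) = (i : ℕ) + 1 → (t i - t j).re > 2 * Lam η ℓ + max η.re 0) ∧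
       ∀ i : Fin N, (i : ℕ) = N - 1 →
         (t i).re > Lam η ℓ + max (max (η / 2).re 0) (max (-xiP τ η ξp).re (-xiM η ξm).re)}

/-- the sector `Ã_τ`. -/
def AtilTau (τ η ξp ξm : ℂ) {N : ℕ} (ℓ : Fin N → ℂ) : Set (Fin N → ℂ) :=
  {t | (∀ i j : Fin N, (j : ℕ) = (i : ℕ) + 1 →
          (t i - t j).re > 2 * Lam η ℓ + max η.re 0 - τ.re) ∧
       ∀ i : Fin N, (i : ℕ) = N - 1 →
         (t i).re > Lam η ℓ + max (max (η / 2).re 0) (max (-xiP τ η ξp).re (-xiM η ξm).re) - τ.re}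

/-- the cone `Q₊ ⊂ ℤ^N` spanned by the simple roots `e_i - e_{i+1}` and `e_N`. -/
def Qplus {N : ℕ} : Set (Fin N → ℤ) :=
  {α | ∃ β : Fin N → ℕ, ∀ j : Fin N,
    α j = (β j : ℤ) -
      if _h : 0 < (j : ℕ) then
        (β ⟨(j : ℕ) - 1, lt_of_le_of_lt (Nat.sub_le _ _) j.isLt⟩ : ℤ)
      else 0}

/-- the cube `[0,π]^M` over which the contour integrals are iterated. -/
def box (M : ℕ) : Set (Fin M → ℝ) := Set.univ.pi fun _ => Set.Icc (0 : ℝ) Real.pi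

/-- the point of the contour `C^γ_k(t)` with parameters `s ∈ [0,π]^M`. -/
def cpt {M N : ℕ} (k : Fin M → Fin N) (γ : Fin M → ℂ) (t : Fin N → ℂ) (s : Fin M → ℝ) :
    Fin M → ℂ := fun i => t (k i) + γ i + (s i : ℂ) * I

/-- the iterated contour integral over `C^γ_k(t)`. -/
def contourIntegral {M N : ℕ} (k : Fin M → Fin N) (γ : Fin M → ℂ) (t : Fin N → ℂ)
    (f : (Fin M → ℂ) → ℂ) : ℂ :=
  I ^ M * ∫ s in box M, f (cpt k γ t s)

/-- nonvanishing of all denominators occurring in `w_k(x;t)/Φ_k(t)`. -/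
def w0DenomOK (τ η ξp ξm : ℂ) {N M : ℕ} (ℓ : Fin N → ℂ) (k : Fin M → Fin N) (x : Fin M → ℂ)
    (t : Fin N → ℂ) : Prop :=
  (∀ s : Fin N, ∀ i : Fin M,
      poch (qsq τ) (exp (-2 * (t s + x i + ℓ s * η))) ≠ 0 ∧
      poch (qsq τ) (exp (-2 * (t s - x i + ℓ s * η))) ≠ 0) ∧
  (∀ i : Fin M,
      poch (qsq τ) (exp (2 * (-xiP τ η ξp - x i))) ≠ 0 ∧
      poch (qsq τ) (exp (2 * (-xiM η ξm - x i))) ≠ 0) ∧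
  (∀ i : Fin M, ∀ s : Fin N, k i ≤ s → theta (qsq τ) (exp (2 * (x i - t s + ℓ s * η))) ≠ 0) ∧
  ∀ i j : Fin M, i < j →
      poch (qsq τ) (exp (-2 * (x i + x j - η))) ≠ 0 ∧
      poch (qsq τ) (exp (-2 * (x i - x j - η))) ≠ 0

/-- nonvanishing of the theta denominators of `Φ_k(t)`. -/
def PhiDenomOK (τ η ξp ξm : ℂ) {N M : ℕ} (ℓ : Fin N → ℂ) (k : Fin M → Fin N)
    (t : Fin N → ℂ) : Prop :=
  ∀ r, theta (qsq τ) (phiC η ξp ξm ℓ k r * exp (2 * t r)) ≠ 0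

/-- nonvanishing of all sinh denominators occurring in `β_m(x;t)` (for any rearrangement `m`). -/
def betaDenomOK (η : ℂ) {N M : ℕ} (ℓ : Fin N → ℂ) (x : Fin M → ℂ) (t : Fin N → ℂ) : Prop :=
  (∀ s : Fin N, ∀ i : Fin M,
      sinh (t s + x i - ℓ s * η) ≠ 0 ∧ sinh (t s - x i - ℓ s * η) ≠ 0) ∧
  ∀ i j : Fin M, i < j → sinh (x i + x j) ≠ 0 ∧ sinh (x i - x j) ≠ 0

section Shift

variable {ι A K : Type*} [DecidableEq ι]

lemma add_ite_eq_add_single [AddZeroClass A] (t : ι → A) (r : ι) (a : A) :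
    (fun s => t s + if s = r then a else 0) = t + Pi.single r a := by
  ext s
  simp [Pi.single_apply]

lemma prod_add_single [AddZeroClass A] [CommMonoid K] {f : ι → A → K} {t : ι → A} {r : ι} {a : A}
    {c : K} (S : Finset ι) (h : f r (t r + a) = c * f r (t r)) :
    ∏ s ∈ S, f s ((t + Pi.single r a : ι → A) s) =
      (if r ∈ S then c else 1) * ∏ s ∈ S, f s (t s) := by
  have hfactor (s : ι) :
      f s ((t + Pi.single r a : ι → A) s) = (if s = r then c else 1) * f s (t s) := by
    obtain rfl | hs := eq_or_ne s r
    · simp [h]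
    · simp [hs]
  simp only [hfactor, Finset.prod_mul_distrib, Finset.prod_ite_eq']

end Shift

section Theta

lemma multipliable_one_sub_mul_pow {𝕜 : Type*} [NormedField 𝕜] [CompleteSpace 𝕜] {p : 𝕜}
    (hp : ‖p‖ < 1) (z : 𝕜) :
    Multipliable fun m : ℕ => 1 - z * p ^ m := by
  have hsum : Summable fun m : ℕ => ‖-(z * p ^ m)‖ := by
    simpa only [norm_neg, norm_mul, norm_pow] using
      (summable_geometric_of_lt_one (norm_nonneg p) hp).mul_left ‖z‖
  simpa only [sub_eq_add_neg] using multipliable_one_add_of_summable hsum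

variable {p : ℂ}

lemma poch_eq_one_sub_mul (hp : ‖p‖ < 1) (z : ℂ) : poch p z = (1 - z) * poch p (p * z) := by
  have hshift (m : ℕ) : 1 - p * z * p ^ m = 1 - z * p ^ (m + 1) := by ring
  have hmul := multipliable_one_sub_mul_pow hp (p * z)
  simp only [hshift] at hmul
  simp only [poch, hshift]
  rw [tprod_eq_zero_mul' (f := fun m : ℕ => 1 - z * p ^ m) hmul, pow_zero, mul_one]

lemma theta_base_mul (hp : ‖p‖ < 1) (hp0 : p ≠ 0) {z : ℂ} (hz : z ≠ 0) :
    theta p (p * z) = -z⁻¹ * theta p z := by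
  have hinv : p * (p * z)⁻¹ = z⁻¹ := by field_simp
  rw [theta, theta, hinv, poch_eq_one_sub_mul hp z, poch_eq_one_sub_mul hp z⁻¹]
  field_simp
  ring

lemma theta_base_mul_div (hp : ‖p‖ < 1) (hp0 : p ≠ 0) {c z : ℂ} (hc : c ≠ 0) (hz : z ≠ 0) :
    theta p (p * z) / theta p (c * (p * z)) = c * (theta p z / theta p (c * z)) := by
  rw [mul_left_comm, theta_base_mul hp hp0 hz, theta_base_mul hp hp0 (mul_ne_zero hc hz),
    mul_div_mul_comm]
  congr 1
  field_simp

end Theta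

section Exponential

variable {τ : ℂ}

lemma norm_qsq_lt_one (hτ : τ.re < 0) : ‖qsq τ‖ < 1 := by
  rw [qsq, norm_exp, Real.exp_lt_one_iff, ← ofReal_ofNat, re_ofReal_mul]
  linarith

lemma qsq_mul_exp (τ y : ℂ) : qsq τ * exp y = exp (y + 2 * τ) := by
  rw [qsq, ← exp_add, add_comm]

lemma one_sub_exp_neg_two_mul (y : ℂ) : 1 - exp (-2 * y) = 2 * exp (-y) * sinh y := by
  have hsq : exp (-2 * y) = exp (-y) * exp (-y) := by rw [← exp_add]; ring_nf
  have hinv : exp y * exp (-y) = 1 := by rw [← exp_add, add_neg_cancel, exp_zero]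
  rw [hsq, sinh]
  linear_combination -hinv

lemma poch_exp_add (hτ : τ.re < 0) (y : ℂ) :
    poch (qsq τ) (exp (-2 * (y + τ))) =
      2 * exp (-(y + τ)) * sinh (y + τ) * poch (qsq τ) (exp (-2 * y)) := by
  rw [poch_eq_one_sub_mul (norm_qsq_lt_one hτ), one_sub_exp_neg_two_mul, qsq_mul_exp]
  ring_nf

lemma poch_exp_div_add (hτ : τ.re < 0) (a b c d : ℂ) :
    (poch (qsq τ) (exp (-2 * (a + τ))) * poch (qsq τ) (exp (-2 * (b + τ)))) /
        (poch (qsq τ) (exp (-2 * (c + τ))) * poch (qsq τ) (exp (-2 * (d + τ)))) =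
      exp (c + d - a - b) *
          ((sinh (a + τ) * sinh (b + τ)) / (sinh (c + τ) * sinh (d + τ))) *
        ((poch (qsq τ) (exp (-2 * a)) * poch (qsq τ) (exp (-2 * b))) /
          (poch (qsq τ) (exp (-2 * c)) * poch (qsq τ) (exp (-2 * d)))) := by
  have hexp : exp (c + d - a - b) =
      exp (-(a + τ)) * exp (-(b + τ)) / (exp (-(c + τ)) * exp (-(d + τ))) := by
    rw [← exp_add, ← exp_add, ← exp_sub]
    ring_nf
  simp only [poch_exp_add hτ, hexp]
  ring

lemma theta_exp_sub (hτ : τ.re < 0) (y : ℂ) :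
    theta (qsq τ) (exp (2 * (y - τ))) = -exp (2 * (y - τ)) * theta (qsq τ) (exp (2 * y)) := by
  have hstep := theta_base_mul (norm_qsq_lt_one hτ) (exp_ne_zero _) (exp_ne_zero (2 * (y - τ)))
  rw [qsq_mul_exp, show 2 * (y - τ) + 2 * τ = 2 * y by ring] at hstep
  rw [hstep]
  field_simp

lemma prod_theta_exp_add_single {ι : Type*} [DecidableEq ι] (hτ : τ.re < 0) (S : Finset ι)
    (r : ι) (x : ℂ) (c t : ι → ℂ) :
    ∏ s ∈ S, theta (qsq τ) (exp (2 * (x - (t + Pi.single r τ : ι → ℂ) s + c s))) =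
      (if r ∈ S then -exp (2 * (x - t r + c r - τ)) else 1) *
        ∏ s ∈ S, theta (qsq τ) (exp (2 * (x - t s + c s))) := by
  refine prod_add_single (f := fun s y => theta (qsq τ) (exp (2 * (x - y + c s)))) S ?_
  rw [← theta_exp_sub hτ]
  ring_nf

end Exponential

section WeightFunction

/-- The contribution of the index `i` to `φ_{k;r}`; the power of `e^{-4 ℓ_r η}` in `φ_{k;r}` is
distributed over the `i` with `r < k_i`. -/
def phiFactor (η ξp ξm : ℂ) {M N : ℕ} (ℓ : Fin N → ℂ) (k : Fin M → Fin N) (i : Fin M)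
    (r : Fin N) : ℂ :=
  if k i = r then
    exp (2 * (η - ξp - ξm) +
      4 * ((M : ℂ) - ((i : ℕ) + 1) - ∑ s ∈ Finset.univ.filter fun s : Fin N => r ≤ s, ℓ s) * η)
  else if r < k i then exp (-4 * ℓ r * η) else 1

variable {τ η ξp ξm : ℂ} {M N : ℕ} {ℓ : Fin N → ℂ} {k : Fin M → Fin N} {i : Fin M} {r : Fin N}
  {x : ℂ} {t : Fin N → ℂ}

lemma phiC_eq_prod_phiFactor :
    phiC η ξp ξm ℓ k r = ∏ i, phiFactor η ξp ξm ℓ k i r := by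
  have hpow : exp (-4 * ℓ r * η * ((Finset.univ.filter fun i : Fin M => r < k i).card : ℂ)) =
      ∏ i : Fin M, if r < k i then exp (-4 * ℓ r * η) else 1 := by
    rw [← Finset.prod_filter, Finset.prod_const, ← exp_nat_mul, mul_comm]
  rw [phiC, hpow, Finset.prod_filter, ← Finset.prod_mul_distrib]
  refine Finset.prod_congr rfl fun i _ => ?_
  by_cases h : k i = r <;> simp [phiFactor, h]

lemma phiC_ne_zero : phiC η ξp ξm ℓ k r ≠ 0 :=
  mul_ne_zero (Finset.prod_ne_zero_iff.2 fun _ _ => exp_ne_zero _) (exp_ne_zero _)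

lemma PhiF_add_single (hτ : τ.re < 0) :
    PhiF τ η ξp ξm ℓ k (t + Pi.single r τ) = phiC η ξp ξm ℓ k r * PhiF τ η ξp ξm ℓ k t := by
  have hstep : theta (qsq τ) (exp (2 * (t r + τ))) /
        theta (qsq τ) (phiC η ξp ξm ℓ k r * exp (2 * (t r + τ))) =
      phiC η ξp ξm ℓ k r * (theta (qsq τ) (exp (2 * t r)) /
        theta (qsq τ) (phiC η ξp ξm ℓ k r * exp (2 * t r))) := by
    rw [mul_add, ← qsq_mul_exp]
    exact theta_base_mul_div (norm_qsq_lt_one hτ) (exp_ne_zero _) phiC_ne_zero (exp_ne_zero _)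
  have hprod := prod_add_single Finset.univ
    (f := fun s y => theta (qsq τ) (exp (2 * y)) /
      theta (qsq τ) (phiC η ξp ξm ℓ k s * exp (2 * y))) hstep
  rwa [if_pos (Finset.mem_univ r)] at hprod

lemma Ffun_add_single (hτ : τ.re < 0) :
    Ffun τ η ℓ x (t + Pi.single r τ) =
      exp (4 * ℓ r * η) *
          ((sinh (t r + x - ℓ r * η + τ) * sinh (t r - x - ℓ r * η + τ)) /
            (sinh (t r + x + ℓ r * η + τ) * sinh (t r - x + ℓ r * η + τ))) *
        Ffun τ η ℓ x t := by
  have hstep := poch_exp_div_add hτ (t r + x - ℓ r * η) (t r - x - ℓ r * η)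
    (t r + x + ℓ r * η) (t r - x + ℓ r * η)
  rw [show t r + x + ℓ r * η + (t r - x + ℓ r * η) - (t r + x - ℓ r * η) - (t r - x - ℓ r * η) =
    4 * ℓ r * η by ring] at hstep
  have hprod := prod_add_single Finset.univ (t := t) (r := r) (a := τ)
    (f := fun s y =>
      (poch (qsq τ) (exp (-2 * (y + x - ℓ s * η))) *
          poch (qsq τ) (exp (-2 * (y - x - ℓ s * η)))) /
        (poch (qsq τ) (exp (-2 * (y + x + ℓ s * η))) *
          poch (qsq τ) (exp (-2 * (y - x + ℓ s * η)))))
    (by convert hstep using 6 <;> ring)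
  rwa [if_pos (Finset.mem_univ r)] at hprod

lemma ufun_add_single (hτ : τ.re < 0) :
    ufun τ η ξp ξm ℓ k i x (t + Pi.single r τ) =
      exp (-(t + Pi.single r τ : Fin N → ℂ) (k i)) *
          theta (qsq τ) (exp (2 *
            (x - (t + Pi.single r τ : Fin N → ℂ) (k i) + psiC τ η ξp ξm ℓ k i))) *
        ((if k i < r then -exp (2 * (x - t r - ℓ r * η - τ)) else 1) *
          ∏ s ∈ Finset.univ.filter fun s : Fin N => k i < s,
            theta (qsq τ) (exp (2 * (x - t s - ℓ s * η)))) /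
        ((if k i ≤ r then -exp (2 * (x - t r + ℓ r * η - τ)) else 1) *
          ∏ s ∈ Finset.univ.filter fun s : Fin N => k i ≤ s,
            theta (qsq τ) (exp (2 * (x - t s + ℓ s * η)))) := by
  have hnum := prod_theta_exp_add_single hτ (Finset.univ.filter fun s : Fin N => k i < s) r x
    (fun s => -(ℓ s * η)) t
  have hden := prod_theta_exp_add_single hτ (Finset.univ.filter fun s : Fin N => k i ≤ s) r x
    (fun s => ℓ s * η) t
  simp only [← sub_eq_add_neg, Finset.mem_filter_univ] at hnum hden
  rw [ufun, hnum, hden]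

lemma ufun_add_single_of_gt (hτ : τ.re < 0) (h : r < k i) :
    ufun τ η ξp ξm ℓ k i x (t + Pi.single r τ) = ufun τ η ξp ξm ℓ k i x t := by
  rw [ufun_add_single hτ, Pi.add_apply, Pi.single_eq_of_ne h.ne', add_zero, if_neg h.not_gt,
    if_neg h.not_ge, one_mul, one_mul, ufun]

lemma ufun_add_single_of_lt (hτ : τ.re < 0) (h : k i < r) :
    ufun τ η ξp ξm ℓ k i x (t + Pi.single r τ) =
      exp (-4 * ℓ r * η) * ufun τ η ξp ξm ℓ k i x t := by
  have hexp : exp (-4 * ℓ r * η) =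
      -exp (2 * (x - t r - ℓ r * η - τ)) / -exp (2 * (x - t r + ℓ r * η - τ)) := by
    rw [neg_div_neg_eq, ← exp_sub]
    ring_nf
  rw [ufun_add_single hτ, Pi.add_apply, Pi.single_eq_of_ne h.ne, add_zero, if_pos h, if_pos h.le,
    hexp, ufun]
  ring

lemma ufun_add_single_self (hτ : τ.re < 0) :
    ufun τ η ξp ξm ℓ k i x (t + Pi.single (k i) τ) =
      exp (2 * (ξp + ξm - η) +
          4 * ((∑ s ∈ Finset.univ.filter fun s : Fin N => k i < s, ℓ s) - (M : ℂ) +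
            ((i : ℕ) + 1)) * η) *
        ufun τ η ξp ξm ℓ k i x t := by
  have harg : x - (t (k i) + τ) + psiC τ η ξp ξm ℓ k i =
      x - t (k i) + psiC τ η ξp ξm ℓ k i - τ := by ring
  have hexp : exp (2 * (ξp + ξm - η) +
        4 * ((∑ s ∈ Finset.univ.filter fun s : Fin N => k i < s, ℓ s) - (M : ℂ) +
          ((i : ℕ) + 1)) * η) =
      exp (-τ) * exp (2 * (x - t (k i) + psiC τ η ξp ξm ℓ k i - τ)) /
        exp (2 * (x - t (k i) + ℓ (k i) * η - τ)) := by
    rw [← exp_add, ← exp_sub, psiC, xiP, xiM]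
    ring_nf
  rw [ufun_add_single hτ, Pi.add_apply, Pi.single_eq_same, harg, theta_exp_sub hτ, neg_add, exp_add,
    if_neg (lt_irrefl (k i)), if_pos (le_refl (k i)), hexp, ufun]
  ring

lemma phiFactor_mul_ufun_add_single (hτ : τ.re < 0) :
    phiFactor η ξp ξm ℓ k i r * ufun τ η ξp ξm ℓ k i x (t + Pi.single r τ) =
      exp (-4 * ℓ r * η) * ufun τ η ξp ξm ℓ k i x t := by
  obtain h | rfl | h := lt_trichotomy (k i) r
  · rw [phiFactor, if_neg h.ne, if_neg h.not_gt, one_mul, ufun_add_single_of_lt hτ h]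
  · have hsum : ∑ s ∈ Finset.univ.filter fun s : Fin N => k i ≤ s, ℓ s =
        ℓ (k i) + ∑ s ∈ Finset.univ.filter fun s : Fin N => k i < s, ℓ s := by
      rw [Finset.filter_le_eq_Ici, Finset.filter_lt_eq_Ioi, Finset.add_sum_Ioi_eq_sum_Ici]
    rw [phiFactor, if_pos rfl, ufun_add_single_self hτ, ← mul_assoc, ← exp_add, hsum]
    ring_nf
  · rw [phiFactor, if_neg h.ne', if_pos h, ufun_add_single_of_gt hτ h]

lemma phiC_mul_w0_add_single (hτ : τ.re < 0) {x : Fin M → ℂ} :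
    phiC η ξp ξm ℓ k r * w0 τ η ξp ξm ℓ k x (t + Pi.single r τ) =
      (∏ i, (sinh (t r + x i - ℓ r * η + τ) * sinh (t r - x i - ℓ r * η + τ)) /
          (sinh (t r + x i + ℓ r * η + τ) * sinh (t r - x i + ℓ r * η + τ))) *
        w0 τ η ξp ξm ℓ k x t := by
  rw [phiC_eq_prod_phiFactor, w0, w0, ← mul_assoc, ← mul_assoc, ← Finset.prod_mul_distrib,
    ← Finset.prod_mul_distrib]
  congr 1
  refine Finset.prod_congr rfl fun i _ => ?_
  have hcancel : exp (4 * ℓ r * η) * exp (-4 * ℓ r * η) = 1 := by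
    rw [← exp_add, ← exp_zero]
    ring_nf
  rw [mul_left_comm, phiFactor_mul_ufun_add_single hτ, Ffun_add_single hτ]
  generalize (sinh (t r + x i - ℓ r * η + τ) * sinh (t r - x i - ℓ r * η + τ)) /
    (sinh (t r + x i + ℓ r * η + τ) * sinh (t r - x i + ℓ r * η + τ)) = R
  linear_combination
    R * Ffun τ η ℓ (x i) t * gfun τ η ξp ξm (x i) * ufun τ η ξp ξm ℓ k i (x i) t * hcancel

end WeightFunction

theorem stmt11_general (τ η ξp ξm : ℂ) (hτ : τ.re < 0) (M N : ℕ) (ℓ : Fin N → ℂ)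
    (k : Fin M → Fin N) (r : Fin N) (x : Fin M → ℂ) (t : Fin N → ℂ)
    (_hw : w0DenomOK τ η ξp ξm ℓ k x t)
    (_hw' : w0DenomOK τ η ξp ξm ℓ k x (t + Pi.single r τ))
    (_hΦ : PhiDenomOK τ η ξp ξm ℓ k t)
    (_hΦ' : PhiDenomOK τ η ξp ξm ℓ k (t + Pi.single r τ))
    (_hrhs : ∀ i : Fin M,
      sinh (t r + x i + ℓ r * η + τ) ≠ 0 ∧ sinh (t r - x i + ℓ r * η + τ) ≠ 0) :
    wfun τ η ξp ξm ℓ k x (t + Pi.single r τ) =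
      (∏ i, (sinh (t r + x i - ℓ r * η + τ) * sinh (t r - x i - ℓ r * η + τ)) /
          (sinh (t r + x i + ℓ r * η + τ) * sinh (t r - x i + ℓ r * η + τ))) *
        wfun τ η ξp ξm ℓ k x t := by
  rw [wfun, wfun, PhiF_add_single hτ, mul_right_comm, phiC_mul_w0_add_single hτ]
  ring

/-- functional equation `w_k(x; t + τ e_r) = (⋯) w_k(x;t)`. -/
theorem stmt11 (τ η ξp ξm : ℂ) (hτ : τ.re < 0) (M N : ℕ) (hN : 1 ≤ N)
    (ℓ : Fin N → ℂ) (k : Fin M → Fin N) (hk : Monotone k) (r : Fin N)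
    (x : Fin M → ℂ) (t : Fin N → ℂ)
    (hw : w0DenomOK τ η ξp ξm ℓ k x t)
    (hw' : w0DenomOK τ η ξp ξm ℓ k x (fun s => t s + if s = r then τ else 0))
    (hΦ : PhiDenomOK τ η ξp ξm ℓ k t)
    (hΦ' : PhiDenomOK τ η ξp ξm ℓ k (fun s => t s + if s = r then τ else 0))
    (hrhs : ∀ i : Fin M,
      sinh (t r + x i + ℓ r * η + τ) ≠ 0 ∧ sinh (t r - x i + ℓ r * η + τ) ≠ 0) :
    wfun τ η ξp ξm ℓ k x (fun s => t s + if s = r then τ else 0) =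
      (∏ i, (sinh (t r + x i - ℓ r * η + τ) * sinh (t r - x i - ℓ r * η + τ)) /
          (sinh (t r + x i + ℓ r * η + τ) * sinh (t r - x i + ℓ r * η + τ))) *
        wfun τ η ξp ξm ℓ k x t := by
  rw [add_ite_eq_add_single] at hw' hΦ' ⊢
  exact stmt11_general τ η ξp ξm hτ M N ℓ k r x t hw hw' hΦ hΦ' hrhs

end BQKZ
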